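/- arXiv:1504.07157 — 2 statements merged into one kernel-verified Lean document; each statement's English description precedes it below -/
import Mathlib

section
/- Let M be a locally compact Hausdorff topological space and let Γ be a group acting on M by homeomorphisms, such that the action is proper (for all compact subsets C, C' ⊆ M, the set { γ ∈ Γ : γ·C ∩ C' ≠ ∅ } is finite) and cocompact (the orbit space M/Γ with the quotient topology is compact). If every element of Γ fixes at least one point of M (i.e. every element is elliptic), then Γ has finite exponent: there exists an integer N ≥ 1 such that γ^N = 1 for every γ ∈ Γ. -/
open Pointwise

/-- If a group `Γ` acts properly and cocompactly by homeomorphisms on a locally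
compact Hausdorff space `M` and every element of `Γ` fixes at least one point
(every element is elliptic), then `Γ` has finite exponent. -/
theorem proper_cocompact_action_all_elliptic_finite_exponent
    {M : Type*} [TopologicalSpace M] [T2Space M] [LocallyCompactSpace M]
    (Γ : Type*) [Group Γ] [MulAction Γ M]
    (hcont : ∀ γ : Γ, Continuous (fun x : M => γ • x))
    (hproper : ∀ C C' : Set M, IsCompact C → IsCompact C' →
      {γ : Γ | (γ • C) ∩ C' ≠ ∅}.Finite)
    (hcocompact : CompactSpace (Quotient (MulAction.orbitRel Γ M)))
    (helliptic : ∀ γ : Γ, ∃ x : M, γ • x = x) :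
    ∃ N : ℕ, 1 ≤ N ∧ ∀ γ : Γ, γ ^ N = 1 := by
  have : ContinuousConstSMul Γ M := ⟨hcont⟩
  have hord : ∀ γ : Γ, 0 < orderOf γ := by
    intro γ
    obtain ⟨x, hx⟩ := helliptic γ
    have hfin := hproper {x} {x} isCompact_singleton isCompact_singleton
    rw [orderOf_pos_iff, ← finite_powers]
    refine hfin.subset ?_
    rintro _ ⟨n, rfl⟩
    have h : (γ ^ n) • x = x := by
      induction n with
      | zero => simp
      | succ k ih => rw [pow_succ, mul_smul, hx, ih]
    simp [h]
  obtain ⟨K, hK, hcov⟩ : ∃ K : Set M, IsCompact K ∧ ∀ x : M, ∃ g : Γ, g • x ∈ K := by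
    choose k hk hkx using fun x : M => exists_compact_mem_nhds x
    let q : M → Quotient (MulAction.orbitRel Γ M) := Quotient.mk _
    have hq : IsOpenMap q := isOpenMap_quotient_mk'_mul
    obtain ⟨t, ht⟩ := isCompact_univ.elim_finite_subcover (fun x : M => q '' interior (k x))
      (fun x => hq _ isOpen_interior) (by
        intro y _
        obtain ⟨x, rfl⟩ := Quotient.exists_rep y
        exact Set.mem_iUnion.2 ⟨x, x, mem_interior_iff_mem_nhds.2 (hkx x), rfl⟩)
    refine ⟨⋃ x ∈ t, k x, t.isCompact_biUnion fun x _ => hk x, fun x => ?_⟩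
    have h := ht (Set.mem_univ (q x))
    simp only [Set.mem_iUnion] at h
    obtain ⟨i, hi, y, hy, hyx⟩ := h
    obtain ⟨g, hg⟩ := MulAction.orbitRel_apply.1 (Quotient.exact hyx)
    refine ⟨g, Set.mem_biUnion hi ?_⟩
    have hg' : g • x = y := hg
    rw [hg']
    exact interior_subset hy
  have hF := hproper K K hK hK
  refine ⟨∏ δ ∈ hF.toFinset, orderOf δ, Finset.prod_pos fun δ _ => hord δ, fun γ => ?_⟩
  obtain ⟨x, hx⟩ := helliptic γ
  obtain ⟨g, hg⟩ := hcov x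
  have hmem : g * γ * g⁻¹ ∈ hF.toFinset := by
    rw [Set.Finite.mem_toFinset]
    refine Set.Nonempty.ne_empty ⟨g • x, ⟨g • x, hg, ?_⟩, hg⟩
    simp [mul_smul, hx]
  have h1 := orderOf_dvd_iff_pow_eq_one.1 (Finset.dvd_prod_of_mem orderOf hmem)
  rw [conj_pow] at h1
  simpa using h1
end

section
/- Let E be a finite-dimensional real inner product space of odd dimension, and let G be a group of linear isometries of E such that every nonidentity element of G fixes only the origin (i.e. for g ∈ G with g ≠ 1, g(v) = v implies v = 0; equivalently, G acts freely on the unit sphere of E). Then every nonidentity element of G equals −id, and consequently G is cyclic of order at most 2. -/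
theorem aux_det_adjoint {E : Type*} [NormedAddCommGroup E] [InnerProductSpace ℝ E]
    [FiniteDimensional ℝ E] (f : E →ₗ[ℝ] E) :
    LinearMap.det (LinearMap.adjoint f) = LinearMap.det f := by
  have b := stdOrthonormalBasis ℝ E
  rw [← LinearMap.det_toMatrix b.toBasis, ← LinearMap.det_toMatrix b.toBasis,
    LinearMap.toMatrix_adjoint, Matrix.det_conjTranspose]
  simp

theorem aux_fixed {E : Type*} [NormedAddCommGroup E] [InnerProductSpace ℝ E]
    [FiniteDimensional ℝ E] (hodd : Odd (Module.finrank ℝ E)) (f : E →ₗ[ℝ] E)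
    (h1 : LinearMap.adjoint f * f = 1) (hd : LinearMap.det f = 1) :
    ∃ v : E, v ≠ 0 ∧ f v = v := by
  have h2 : LinearMap.det (f - 1) = 0 := by
    have e : LinearMap.adjoint (f - 1) * f = (-1 : ℝ) • (f - 1) := by
      have : LinearMap.adjoint (1 : E →ₗ[ℝ] E) = 1 := LinearMap.adjoint_id
      rw [map_sub, this, sub_mul, h1, one_mul]
      simp
    have e2 := congrArg LinearMap.det e
    rw [map_mul, aux_det_adjoint, hd, LinearMap.det_smul, hodd.neg_one_pow] at e2
    linarith
  have h3 := LinearMap.bot_lt_ker_of_det_eq_zero h2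
  obtain ⟨v, hv, hv0⟩ := (Submodule.ne_bot_iff _).1 h3.ne'
  refine ⟨v, hv0, ?_⟩
  simpa [sub_eq_zero] using hv

/-- If a group of linear isometries of an odd-dimensional real inner product space
is such that every nonidentity element fixes only the origin, then every
nonidentity element is `-id`, and the group is cyclic of order at most 2. -/
theorem group_of_isometries_free_on_odd_dim_space
    {E : Type*} [NormedAddCommGroup E] [InnerProductSpace ℝ E]
    [FiniteDimensional ℝ E] (hodd : Odd (Module.finrank ℝ E))
    (G : Subgroup (E ≃ₗᵢ[ℝ] E))
    (hfree : ∀ g ∈ G, g ≠ 1 → ∀ v : E, g v = v → v = 0) :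
    (∀ g ∈ G, g ≠ 1 → ∀ v : E, g v = -v) ∧ IsCyclic G ∧ Nat.card G ≤ 2 := by
  have key : ∀ g ∈ G, g ≠ 1 → ∀ v : E, g v = -v := by
    intro g hg hg1 v
    have hsq : g * g = 1 := by
      by_contra hne
      let f : E →ₗ[ℝ] E := g.toLinearEquiv.toLinearMap
      have hf : LinearMap.adjoint f * f = 1 := by
        have : LinearMap.adjoint f = g.symm.toLinearEquiv.toLinearMap :=
          LinearIsometryEquiv.adjoint_toLinearMap_eq_symm g
        rw [this]
        ext x
        simp [f]
      have hd := congrArg LinearMap.det hf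
      rw [map_mul, aux_det_adjoint, map_one] at hd
      have hff : LinearMap.adjoint (f * f) * (f * f) = 1 := by
        have : LinearMap.adjoint (f * f) = LinearMap.adjoint f * LinearMap.adjoint f :=
          LinearMap.adjoint_comp f f
        rw [this, mul_assoc, ← mul_assoc _ f f, hf, one_mul, hf]
      obtain ⟨w, hw0, hw⟩ := aux_fixed hodd (f * f) hff (by rw [map_mul, hd])
      exact hw0 (hfree (g * g) (G.mul_mem hg hg) hne w hw)
    have hv : g (g v) = v := congrArg (fun h : E ≃ₗᵢ[ℝ] E => h v) hsq
    have := hfree g hg hg1 (g v + v) (by rw [map_add, hv, add_comm])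
    exact eq_neg_of_add_eq_zero_left this
  have huniq : ∀ a b : G, a ≠ 1 → b ≠ 1 → a = b := by
    intro a b ha hb
    apply Subtype.ext
    ext v
    rw [key a a.2 (by simpa using ha), key b b.2 (by simpa using hb)]
  refine ⟨key, ?_, ?_⟩
  · by_cases h : ∃ g : G, g ≠ 1
    · obtain ⟨g, hg⟩ := h
      refine ⟨⟨g, fun x => ?_⟩⟩
      by_cases hx : x = 1
      · exact ⟨0, by simp [hx]⟩
      · exact ⟨1, by simpa using huniq g x hg hx⟩
    · push Not at h
      exact ⟨⟨1, fun x => ⟨0, by simp [h x]⟩⟩⟩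
  · classical
    have := Nat.card_le_card_of_injective (fun g : G => decide (g = 1)) (by
      intro a b hab
      by_cases ha : a = 1
      · have : b = 1 := by simpa [ha] using hab
        rw [ha, this]
      · have hb : b ≠ 1 := by simpa [ha] using hab
        exact huniq a b ha hb)
    simpa using this
end
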